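/- arXiv:2204.05974 — 6 statements merged into one kernel-verified Lean document; each statement's English description precedes it below -/
import Mathlib

section
/- Let X be a totally disconnected Tychonoff space. Then the following are equivalent: (a) C_p(X, 𝔻) is non-meager; (b) C_p(X, 𝔻) is a Baire space; (c) X has the B_𝔻-property. -/
open Set Topology

/-- `Cp X Y` : continuous functions from `X` to `Y` with the topology of pointwise
convergence, i.e. the subspace topology inherited from the product space `Y^X`. -/
abbrev Cp (X Y : Type*) [TopologicalSpace X] [TopologicalSpace Y] : Type _ :=
  {f : X → Y // Continuous f}

/-- The `B_𝔻`-property: for every pairwise disjoint family `{Δ n = A n ∪ B n}` of nonempty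
finite subsets of `X` with `A n ∩ B n = ∅`, there is a strictly increasing sequence `nk`
and a clopen set `W` with `⋃ k, A (nk k) ⊆ W ⊆ (⋃ k, B (nk k))ᶜ`. -/
def BDProperty (X : Type*) [TopologicalSpace X] : Prop :=
  ∀ A B : ℕ → Set X,
    (∀ n, (A n ∪ B n).Finite) →
    (∀ n, (A n ∪ B n).Nonempty) →
    (∀ n, A n ∩ B n = ∅) →
    (∀ m n, m ≠ n → (A m ∪ B m) ∩ (A n ∪ B n) = ∅) →
    ∃ nk : ℕ → ℕ, StrictMono nk ∧
      ∃ W : Set X, IsClopen W ∧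
        (⋃ k, A (nk k)) ⊆ W ∧ W ⊆ (⋃ k, B (nk k))ᶜ

/-!
For `X` totally separated and `Y` finite and discrete, `C_p(X, Y)` is non-meagre iff for every
sequence of finite partial functions with pairwise disjoint nonempty domains there is a continuous
`f` extending infinitely many of them. If `C_p(X, Y)` is non-meagre, consider for each `n` the set
of `f` extending some member of index `≥ n`: it is dense because a basic open set restricts only
finitely many coordinates, which almost all of the domains avoid. Conversely, a dense open set
contains, for every finite `F`, all the extensions of some finite partial function with domain off
`F`: there are finitely many patterns on `F`, and these are treated one after the other. So a
decreasing sequence of dense open sets yields partial functions with disjoint domains, and an `f`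
extending infinitely many of them lies in all the dense open sets. For `Y = Bool` this extension
property is the `B_𝔻`-property.

If `Y` is moreover a group, then finitely many translates of any nonempty open set cover
`C_p(X, Y)`, so if the whole space is non-meagre then so is every nonempty open set.
-/

open Filter Function

section Category

variable {Z : Type*} [TopologicalSpace Z]

theorem not_isMeagre_univ_iff_antitone :
    ¬ IsMeagre (univ : Set Z) ↔ ∀ G : ℕ → Set Z, Antitone G → (∀ n, IsOpen (G n)) →
      (∀ n, Dense (G n)) → (⋂ n, G n).Nonempty := by
  rw [IsMeagre, compl_univ]
  refine ⟨fun h G _ hopen hdense => ?_, fun h hempty => ?_⟩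
  · rw [nonempty_iff_ne_empty]
    intro hG
    exact h (hG ▸ countable_iInter_mem.2 fun n => residual_of_dense_open (hopen n) (hdense n))
  · obtain ⟨S, hopen, hdense, hcount, hS⟩ := mem_residual_iff.1 hempty
    obtain ⟨U, hU⟩ := (hcount.insert univ).exists_eq_range (insert_nonempty _ _)
    have hU_open (n) : IsOpen (U n) :=
      forall_mem_insert.2 ⟨isOpen_univ, hopen⟩ _ (hU ▸ mem_range_self n)
    have hU_dense (n) : Dense (U n) :=
      forall_mem_insert.2 ⟨dense_univ, hdense⟩ _ (hU ▸ mem_range_self n)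
    have hfin (n : ℕ) : (U '' Iic n).Finite := (finite_Iic n).image U
    obtain ⟨z, hz⟩ := h (fun n => ⋂₀ (U '' Iic n))
      (fun m n hmn => sInter_subset_sInter (image_mono (Iic_subset_Iic.2 hmn)))
      (fun n => (hfin n).isOpen_sInter (forall_mem_image.2 fun i _ => hU_open i))
      (fun n => (hfin n).dense_sInter (forall_mem_image.2 fun i _ => hU_open i)
        (forall_mem_image.2 fun i _ => hU_dense i))
    refine hS (a := z) (mem_sInter.2 fun V hV => ?_)
    obtain ⟨n, rfl⟩ : V ∈ range U := hU ▸ mem_insert_of_mem _ hV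
    exact mem_iInter.1 hz n _ (mem_image_of_mem U self_mem_Iic)

theorem baireSpace_of_forall_isOpen_not_isMeagre
    (h : ∀ U : Set Z, IsOpen U → U.Nonempty → ¬ IsMeagre U) : BaireSpace Z := by
  refine ⟨fun G hopen hdense => dense_iff_inter_open.2 fun U hU hne => ?_⟩
  have hG : IsMeagre (⋂ n, G n)ᶜ := by
    rw [IsMeagre, compl_compl]
    exact countable_iInter_mem.2 fun n => residual_of_dense_open (hopen n) (hdense n)
  by_contra hempty
  rw [not_nonempty_iff_eq_empty, ← disjoint_iff_inter_eq_empty] at hempty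
  exact h U hU hne (hG.mono hempty.subset_compl_right)

theorem not_isMeagre_of_iUnion_preimage_eq_univ {W ι : Type*} [TopologicalSpace W] [Countable ι]
    {φ : ι → Z → W} (hcont : ∀ i, Continuous (φ i)) (hopen : ∀ i, IsOpenMap (φ i)) {U : Set W}
    (hcover : ⋃ i, φ i ⁻¹' U = univ) (hZ : ¬ IsMeagre (univ : Set Z)) : ¬ IsMeagre U := by
  intro hU
  rw [← hcover] at hZ
  exact hZ (isMeagre_iUnion fun i => hU.preimage_of_isOpenMap (hcont i) (hopen i))

end Category

theorem exists_isClopen_mem_disjoint_finset {X : Type*} [TopologicalSpace X]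
    [TotallySeparatedSpace X] {a : X} {F : Finset X} (ha : a ∉ F) :
    ∃ V : Set X, IsClopen V ∧ a ∈ V ∧ Disjoint (F : Set X) V := by
  have hsep : ∀ b ∈ F, ∃ V : Set X, IsClopen V ∧ a ∈ V ∧ b ∉ V := fun b hb =>
    exists_isClopen_of_totally_separated (ne_of_mem_of_not_mem hb ha).symm
  choose! V hV haV hbV using hsep
  exact ⟨⋂ b ∈ F, V b, isClopen_biInter_finset hV, mem_iInter₂.2 haV,
    disjoint_left.2 fun b hb hbV' => hbV b hb (mem_iInter₂.1 hbV' b hb)⟩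

section PairwiseDisjoint

variable {X : Type*}

theorem exists_mem_disjoint_of_pairwise_disjoint {ι : Type*} {I : Set ι} (hI : I.Infinite)
    {E : ι → Finset X} (hE : Pairwise (Disjoint on E)) (F : Finset X) :
    ∃ i ∈ I, Disjoint (E i) F := by
  have hfin : (⋃ x ∈ F, {i | x ∈ E i}).Finite :=
    F.finite_toSet.biUnion fun x _ => Subsingleton.finite fun i hi j hj =>
      hE.eq (Finset.not_disjoint_iff.2 ⟨x, hi, hj⟩)
  obtain ⟨i, hiI, hi⟩ := (hI.sdiff hfin).nonempty
  exact ⟨i, hiI, Finset.disjoint_right.2 fun x hxF hxE => hi (mem_biUnion hxF hxE)⟩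

theorem exists_seq_pairwise_disjoint {P : ℕ → Finset X → Prop}
    (h : ∀ n F, ∃ E, P n E ∧ Disjoint E F) :
    ∃ E : ℕ → Finset X, (∀ n, P n (E n)) ∧ Pairwise (Disjoint on E) := by
  classical
  choose next hP hdisj using h
  let used : ℕ → Finset X := fun n => n.rec ∅ fun m F => F ∪ next m F
  have used_mono : Monotone used := monotone_nat_of_le_succ fun _ => Finset.subset_union_left
  refine ⟨fun n => next n (used n), fun n => hP n _, (pairwise_disjoint_on _).2 fun m n hmn => ?_⟩
  have hsub : next m (used m) ⊆ used n :=
    (Finset.subset_union_right : _ ⊆ used (m + 1)).trans (used_mono hmn)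
  exact ((hdisj n (used n)).mono_right hsub).symm

end PairwiseDisjoint

namespace Cp

variable {X Y : Type*} [TopologicalSpace X] [TopologicalSpace Y]

/-- The continuous functions agreeing with `s` on the finite set `F`, that is, the extensions of the
finite partial function `s|_F`. For discrete `Y` these are the basic open sets of `Cp X Y`. -/
def cylinder (F : Finset X) (s : X → Y) : Set (Cp X Y) :=
  {f | EqOn f.1 s F}

theorem isOpen_cylinder [DiscreteTopology Y] (F : Finset X) (s : X → Y) :
    IsOpen (cylinder F s) :=
  (isOpen_set_pi F.finite_toSet fun x _ => isOpen_discrete {s x}).preimage continuous_subtype_val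

theorem exists_cylinder_subset {U : Set (Cp X Y)} (hU : IsOpen U) {f : Cp X Y} (hf : f ∈ U) :
    ∃ F : Finset X, cylinder F f.1 ⊆ U := by
  obtain ⟨V, hV, rfl⟩ := isOpen_induced_iff.1 hU
  obtain ⟨F, u, hu, hsub⟩ := isOpen_pi_iff.1 hV f.1 hf
  exact ⟨F, fun g hg => hsub fun x hx => (hg hx).symm ▸ (hu x hx).2⟩

theorem cylinder_nonempty [TotallySeparatedSpace X] (F : Finset X) (s : X → Y) :
    (cylinder F s).Nonempty := by
  classical
  induction F using Finset.induction_on with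
  | empty =>
    rcases isEmpty_or_nonempty X with hX | ⟨⟨a⟩⟩
    · exact ⟨⟨s, continuous_of_const fun x => isEmptyElim x⟩, fun _ _ => rfl⟩
    · exact ⟨⟨fun _ => s a, continuous_const⟩, fun _ hx => (Finset.notMem_empty _ hx).elim⟩
  | insert a F ha ih =>
    obtain ⟨f, hf⟩ := ih
    obtain ⟨V, hV, haV, hFV⟩ := exists_isClopen_mem_disjoint_finset ha
    have hcont : Continuous (V.piecewise (fun _ => s a) f.1) :=
      continuous_const.piecewise (by simp [hV.frontier_eq]) f.2
    refine ⟨⟨_, hcont⟩, fun x hx => ?_⟩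
    rcases Finset.mem_insert.1 hx with rfl | hxF
    · exact piecewise_eq_of_mem _ _ _ haV
    · exact (piecewise_eq_of_notMem V (fun _ => s a) _ (disjoint_left.1 hFV hxF)).trans (hf hxF)

theorem cylinder_inter_cylinder_nonempty [TotallySeparatedSpace X] {E F : Finset X}
    (hEF : Disjoint E F) (s t : X → Y) : (cylinder F s ∩ cylinder E t).Nonempty := by
  classical
  obtain ⟨f, hf⟩ := cylinder_nonempty (F ∪ E) (F.piecewise s t)
  refine ⟨f, fun x hx => ?_, fun x hx => ?_⟩
  · rw [hf (by simp [hx]), F.piecewise_eq_of_mem _ _ hx]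
  · rw [hf (by simp [hx]), F.piecewise_eq_of_notMem _ _ (Finset.disjoint_left.1 hEF hx)]

theorem exists_finite_forall_eqOn [Finite Y] (F : Finset X) :
    ∃ S : Set (Cp X Y), S.Finite ∧ ∀ f : Cp X Y, ∃ s ∈ S, EqOn f.1 s.1 F := by
  let restrict : Cp X Y → F → Y := fun f x => f.1 x
  refine ⟨range (rangeSplitting restrict), finite_range _, fun f =>
    ⟨_, mem_range_self ⟨restrict f, mem_range_self f⟩, fun x hx => ?_⟩⟩
  exact (congrFun (apply_rangeSplitting restrict ⟨restrict f, mem_range_self f⟩) ⟨x, hx⟩).symm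

section Translation

variable [AddGroup Y] [IsTopologicalAddGroup Y]

instance : AddGroup (Cp X Y) := inferInstanceAs (AddGroup (continuousAddSubgroup X Y))

instance : IsTopologicalAddGroup (Cp X Y) :=
  inferInstanceAs (IsTopologicalAddGroup (continuousAddSubgroup X Y))

theorem exists_finite_iUnion_preimage_add_right_eq_univ [Finite Y] {U : Set (Cp X Y)}
    (hU : IsOpen U) (hne : U.Nonempty) :
    ∃ S : Set (Cp X Y), S.Finite ∧ ⋃ e : S, (· + e.1) ⁻¹' U = univ := by
  obtain ⟨u, hu⟩ := hne
  obtain ⟨F, hF⟩ := exists_cylinder_subset hU hu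
  obtain ⟨S, hS, hcover⟩ := exists_finite_forall_eqOn (Y := Y) F
  refine ⟨S, hS, iUnion_eq_univ_iff.2 fun f => ?_⟩
  obtain ⟨e, he, heF⟩ := hcover (-f + u)
  refine ⟨⟨e, he⟩, hF fun x hx => ?_⟩
  calc f.1 x + e.1 x = f.1 x + (-f.1 x + u.1 x) := by rw [← heF hx]; rfl
    _ = u.1 x := add_neg_cancel_left _ _

theorem baireSpace_iff_not_isMeagre_univ [Finite Y] :
    BaireSpace (Cp X Y) ↔ ¬ IsMeagre (univ : Set (Cp X Y)) := by
  refine ⟨fun _ => not_isMeagre_of_isOpen isOpen_univ univ_nonempty, fun h => ?_⟩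
  refine baireSpace_of_forall_isOpen_not_isMeagre fun U hU hne => ?_
  obtain ⟨S, hS, hcover⟩ := exists_finite_iUnion_preimage_add_right_eq_univ hU hne
  have := hS.to_subtype
  exact not_isMeagre_of_iUnion_preimage_eq_univ (fun e : S => continuous_add_const e.1)
    (fun e : S => isOpenMap_add_right e.1) hcover h

end Translation

/-- Every sequence of nonempty finite partial functions `s n|_(E n)` with pairwise disjoint domains
has infinitely many members with a common continuous extension. This is the form in which the
`B_𝔻`-property enters the category argument, and it makes sense for any codomain. -/
def FrequentInterpolation (X Y : Type*) [TopologicalSpace X] [TopologicalSpace Y] : Prop :=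
  ∀ (E : ℕ → Finset X) (s : ℕ → X → Y), (∀ n, (E n).Nonempty) → Pairwise (Disjoint on E) →
    ∃ f : Cp X Y, ∃ᶠ n in atTop, f ∈ cylinder (E n) (s n)

section Interpolation

variable [TotallySeparatedSpace X]

theorem dense_biUnion_cylinder {ι : Type*} {I : Set ι} (hI : I.Infinite) {E : ι → Finset X}
    (hE : Pairwise (Disjoint on E)) (s : ι → X → Y) :
    Dense (⋃ i ∈ I, cylinder (E i) (s i)) := by
  refine dense_iff_inter_open.2 fun U hU ⟨u, hu⟩ => ?_
  obtain ⟨F, hF⟩ := exists_cylinder_subset hU hu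
  obtain ⟨i, hi, hEF⟩ := exists_mem_disjoint_of_pairwise_disjoint hI hE F
  obtain ⟨f, hfF, hfE⟩ := cylinder_inter_cylinder_nonempty hEF u.1 (s i)
  exact ⟨f, hF hfF, mem_biUnion hi hfE⟩

variable [DiscreteTopology Y]

theorem frequentInterpolation_of_not_isMeagre_univ (h : ¬ IsMeagre (univ : Set (Cp X Y))) :
    FrequentInterpolation X Y := by
  intro E s _ hE
  obtain ⟨f, hf⟩ := not_isMeagre_univ_iff_antitone.1 h
    (fun n => ⋃ m ∈ Ici n, cylinder (E m) (s m))
    (fun _ _ hmn => biUnion_subset_biUnion_left (Ici_subset_Ici.2 hmn))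
    (fun _ => isOpen_biUnion fun _ _ => isOpen_cylinder _ _)
    (fun n => dense_biUnion_cylinder (Ici_infinite n) hE s)
  refine ⟨f, frequently_atTop.2 fun n => ?_⟩
  simpa only [mem_iUnion₂, mem_Ici, exists_prop] using mem_iInter.1 hf n

variable [Nonempty Y] [Infinite X] {G : Set (Cp X Y)}

theorem exists_disjoint_forall_inter_cylinder_subset (hG : IsOpen G) (hd : Dense G) (F : Finset X)
    {S : Set (X → Y)} (hS : S.Finite) :
    ∃ (E : Finset X) (t : X → Y), E.Nonempty ∧ Disjoint E F ∧
      ∀ s ∈ S, cylinder F s ∩ cylinder E t ⊆ G := by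
  classical
  induction S, hS using Set.Finite.induction_on with
  | empty =>
    obtain ⟨a, ha⟩ := Infinite.exists_notMem_finset F
    exact ⟨{a}, fun _ => Classical.arbitrary Y, Finset.singleton_nonempty a,
      Finset.disjoint_singleton_left.2 ha, by simp⟩
  | @insert s S _ _ ih =>
    obtain ⟨E, t, hne, hEF, hsub⟩ := ih
    obtain ⟨f, ⟨hfF, hfE⟩, hfG⟩ := hd.inter_open_nonempty _
      ((isOpen_cylinder F s).inter (isOpen_cylinder E t))
      (cylinder_inter_cylinder_nonempty hEF s t)
    obtain ⟨D, hD⟩ := exists_cylinder_subset hG hfG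
    refine ⟨E ∪ D \ F, f.1, hne.inl, Finset.disjoint_union_left.2 ⟨hEF, Finset.sdiff_disjoint⟩,
      forall_mem_insert.2 ⟨fun g ⟨hgF, hgE⟩ => hD fun x hxD => ?_, fun s' hs' g ⟨hgF, hgE⟩ =>
        hsub s' hs' ⟨hgF, fun x hx => ?_⟩⟩⟩
    · by_cases hxF : x ∈ F
      · rw [hgF hxF, hfF hxF]
      · exact hgE (by simp [hxD, hxF])
    · rw [hgE (by simp [Finset.mem_coe.1 hx]), hfE hx]

theorem exists_disjoint_cylinder_subset [Finite Y] (hG : IsOpen G) (hd : Dense G) (F : Finset X) :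
    ∃ (E : Finset X) (t : X → Y), E.Nonempty ∧ Disjoint E F ∧ cylinder E t ⊆ G := by
  obtain ⟨S, hS, hcover⟩ := exists_finite_forall_eqOn (Y := Y) F
  obtain ⟨E, t, hne, hEF, hsub⟩ :=
    exists_disjoint_forall_inter_cylinder_subset hG hd F (hS.image Subtype.val)
  refine ⟨E, t, hne, hEF, fun f hf => ?_⟩
  obtain ⟨s, hs, hfs⟩ := hcover f
  exact hsub _ (mem_image_of_mem _ hs) ⟨hfs, hf⟩

theorem not_isMeagre_univ_of_frequentInterpolation [Finite Y] (h : FrequentInterpolation X Y) :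
    ¬ IsMeagre (univ : Set (Cp X Y)) := by
  refine not_isMeagre_univ_iff_antitone.2 fun G hG hopen hdense => ?_
  obtain ⟨E, hE, hdisj⟩ := exists_seq_pairwise_disjoint
    (P := fun n E => E.Nonempty ∧ ∃ t : X → Y, cylinder E t ⊆ G n) fun n F =>
      have ⟨E, t, hne, hEF, hsub⟩ := exists_disjoint_cylinder_subset (hopen n) (hdense n) F
      ⟨E, ⟨hne, t, hsub⟩, hEF⟩
  choose hne t hsub using hE
  obtain ⟨f, hf⟩ := h E t hne hdisj
  refine ⟨f, mem_iInter.2 fun n => ?_⟩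
  obtain ⟨m, hnm, hfm⟩ := frequently_atTop.1 hf n
  exact hG hnm (hsub m hfm)

end Interpolation

theorem not_isMeagre_univ_iff_frequentInterpolation [TotallySeparatedSpace X] [DiscreteTopology Y]
    [Finite Y] [Nonempty Y] :
    ¬ IsMeagre (univ : Set (Cp X Y)) ↔ FrequentInterpolation X Y := by
  refine ⟨frequentInterpolation_of_not_isMeagre_univ, fun h => ?_⟩
  rcases finite_or_infinite X with hX | hX
  · have : Finite (Cp X Y) := Subtype.finite
    have : Nonempty (Cp X Y) := ⟨⟨_, continuous_const (y := Classical.arbitrary Y)⟩⟩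
    exact not_isMeagre_of_isOpen isOpen_univ univ_nonempty
  · exact not_isMeagre_univ_of_frequentInterpolation h

end Cp

section BDProperty

variable {X : Type*} [TopologicalSpace X]

theorem BDProperty.frequentInterpolation (h : BDProperty X) : Cp.FrequentInterpolation X Bool := by
  intro E s hne hE
  let A : ℕ → Set X := fun n => {x ∈ (E n : Set X) | s n x = true}
  let B : ℕ → Set X := fun n => {x ∈ (E n : Set X) | s n x = false}
  have hAB (n) : A n ∪ B n = E n := by
    ext x
    cases hx : s n x <;> simp [A, B, hx]
  obtain ⟨φ, hφ, W, hW, hAW, hWB⟩ := h A B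
    (fun n => hAB n ▸ (E n).finite_toSet)
    (fun n => hAB n ▸ (hne n).to_set)
    (fun n => disjoint_iff_inter_eq_empty.1 <| disjoint_left.2 fun x hxA hxB =>
      Bool.false_ne_true (hxB.2.symm.trans hxA.2))
    (fun m n hmn => by
      rw [hAB, hAB, ← disjoint_iff_inter_eq_empty, Finset.disjoint_coe]
      exact hE hmn)
  refine ⟨⟨W.boolIndicator, (continuous_boolIndicator_iff_isClopen W).2 hW⟩,
    frequently_atTop.2 fun k => ⟨φ k, hφ.le_apply, fun x hx => ?_⟩⟩
  cases hsx : s (φ k) x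
  · exact (W.notMem_iff_boolIndicator x).1 fun hxW => hWB hxW (mem_iUnion.2 ⟨k, hx, hsx⟩)
  · exact (W.mem_iff_boolIndicator x).1 (hAW (mem_iUnion.2 ⟨k, hx, hsx⟩))

theorem Cp.FrequentInterpolation.bdProperty (h : Cp.FrequentInterpolation X Bool) :
    BDProperty X := by
  intro A B hfin hne hAB hdisj
  obtain ⟨f, hf⟩ := h (fun n => (hfin n).toFinset) (fun n => (A n).boolIndicator)
    (fun n => (hfin n).toFinset_nonempty.2 (hne n))
    (fun m n hmn => Finite.disjoint_toFinset.2 (disjoint_iff_inter_eq_empty.2 (hdisj m n hmn)))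
  obtain ⟨φ, hφ, hfφ⟩ := extraction_of_frequently_atTop hf
  have hf_eq (k) {x} (hx : x ∈ A (φ k) ∪ B (φ k)) : f.1 x = (A (φ k)).boolIndicator x :=
    hfφ k ((hfin _).coe_toFinset.symm ▸ hx)
  refine ⟨φ, hφ, f.1 ⁻¹' {true}, (isClopen_discrete _).preimage f.2,
    iUnion_subset fun k x hx => ?_, subset_compl_comm.1 <| iUnion_subset fun k x hx => ?_⟩
  · exact (hf_eq k (.inl hx)).trans ((mem_iff_boolIndicator _ x).1 hx)
  · have hxA : x ∉ A (φ k) := fun hxA => (hAB (φ k)).subset ⟨hxA, hx⟩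
    have hfx : f.1 x = false := (hf_eq k (.inr hx)).trans ((notMem_iff_boolIndicator _ x).1 hxA)
    simp [hfx]

theorem bdProperty_iff_frequentInterpolation :
    BDProperty X ↔ Cp.FrequentInterpolation X Bool :=
  ⟨BDProperty.frequentInterpolation, Cp.FrequentInterpolation.bdProperty⟩

end BDProperty

theorem statement0_general (X : Type*) [TopologicalSpace X] [TotallySeparatedSpace X] :
    List.TFAE
      [¬ IsMeagre (Set.univ : Set (Cp X Bool)),
       BaireSpace (Cp X Bool),
       BDProperty X] := by
  tfae_have 2 ↔ 1 := Cp.baireSpace_iff_not_isMeagre_univ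
  tfae_have 1 ↔ 3 :=
    Cp.not_isMeagre_univ_iff_frequentInterpolation.trans bdProperty_iff_frequentInterpolation.symm
  tfae_finish

/-- For a totally disconnected (totally separated) Tychonoff space `X`, the space
`C_p(X, 𝔻)` is non-meager iff it is Baire iff `X` has the `B_𝔻`-property.
Here `𝔻 = {0,1}` is the two-point discrete space, realized as `Bool`. -/
theorem statement0 (X : Type*) [TopologicalSpace X] [T1Space X] [CompletelyRegularSpace X]
    [TotallySeparatedSpace X] :
    List.TFAE
      [¬ IsMeagre (Set.univ : Set (Cp X Bool)),
       BaireSpace (Cp X Bool),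
       BDProperty X] :=
  statement0_general X
end

section
/- Let ψ : K → M be a surjective continuous almost open map between topological spaces, and let X be a Tychonoff space such that C_p(X,K) is a dense subspace of the product space K^X. If C_p(X,K) is a Baire space then C_p(X,M) is a Baire space, and if C_p(X,K) is non-meager then C_p(X,M) is non-meager. -/
open Set Topology Function

/-- A map is almost open if the image of every nonempty open set has nonempty interior. -/
def AlmostOpenMap {K M : Type*} [TopologicalSpace K] [TopologicalSpace M] (ψ : K → M) : Prop :=
  ∀ U : Set K, IsOpen U → U.Nonempty → (interior (ψ '' U)).Nonempty

/-!
Call a map skeletal if the closure of the image of each nonempty open set has nonempty interior.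
Allowing the closure makes the property pass both to products of maps with dense range and, for
continuous maps, to restrictions to dense subspaces, whereas an almost open map restricted to a
dense subspace need not be almost open. Hence `f ↦ ψ ∘ f`, being the restriction of a power of `ψ`
to dense subspaces, is a skeletal map `C_p(X, K) → C_p(X, M)`. Preimages of dense open sets under
skeletal maps are dense, so continuous skeletal maps pull residual sets back to residual sets.
-/

/-- Skeletal (or nearly feebly open) maps, a weakening of `AlmostOpenMap` that continuous maps pass
on to their restrictions to dense subspaces. Continuity is not part of the definition. -/
def IsSkeletalMap {Y Z : Type*} [TopologicalSpace Y] [TopologicalSpace Z] (f : Y → Z) : Prop :=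
  ∀ U : Set Y, IsOpen U → U.Nonempty → (interior (closure (f '' U))).Nonempty

theorem AlmostOpenMap.isSkeletalMap {Y Z : Type*} [TopologicalSpace Y] [TopologicalSpace Z]
    {f : Y → Z} (hf : AlmostOpenMap f) : IsSkeletalMap f :=
  fun U hU hne => (hf U hU hne).mono (interior_mono subset_closure)

namespace IsSkeletalMap

theorem piMap {ι : Type*} {Y Z : ι → Type*} [∀ i, TopologicalSpace (Y i)]
    [∀ i, TopologicalSpace (Z i)] {f : ∀ i, Y i → Z i} (hf : ∀ i, IsSkeletalMap (f i))
    (hdense : ∀ i, DenseRange (f i)) : IsSkeletalMap (Pi.map f) := by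
  classical
  rintro U hU ⟨y, hy⟩
  obtain ⟨F, u, hu, hFU⟩ := isOpen_pi_iff.1 hU y hy
  let box := (F : Set ι).pi fun i => interior (closure (f i '' u i))
  have box_open : IsOpen box := isOpen_set_pi F.finite_toSet fun _ _ => isOpen_interior
  have box_nonempty : box.Nonempty := by
    refine pi_nonempty_iff.2 fun i => ?_
    by_cases hi : i ∈ F
    · obtain ⟨z, hz⟩ := hf i (u i) (hu i hi).1 ⟨y i, (hu i hi).2⟩
      exact ⟨z, fun _ => hz⟩
    · exact ⟨f i (y i), fun h => absurd h hi⟩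
  have box_subset : box ⊆ closure (Pi.map f '' (F : Set ι).pi u) := by
    intro z hz
    rw [← univ_pi_piecewise_univ, piMap_image_univ_pi, closure_pi_set]
    intro i _
    by_cases hi : i ∈ F
    · simpa [hi] using interior_subset (hz i hi)
    · simpa [hi] using hdense i (z i)
  exact box_nonempty.mono <|
    interior_maximal (box_subset.trans (closure_mono (image_mono hFU))) box_open

theorem of_isDenseInducing {A B Y Z : Type*} [TopologicalSpace A] [TopologicalSpace B]
    [TopologicalSpace Y] [TopologicalSpace Z] {i : A → Y} {j : B → Z} {f : Y → Z} {g : A → B}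
    (hi : IsDenseInducing i) (hj : IsDenseInducing j)
    (hcont : Continuous f) (hcomm : f ∘ i = j ∘ g) (hf : IsSkeletalMap f) : IsSkeletalMap g := by
  rintro _ hU ⟨a, ha⟩
  obtain ⟨V, hV, rfl⟩ := hi.isOpen_iff.1 hU
  have image_subset : f '' V ⊆ closure (j '' (g '' (i ⁻¹' V))) :=
    calc f '' V ⊆ f '' closure (V ∩ range i) := image_mono (hi.dense.open_subset_closure_inter hV)
      _ ⊆ closure (f '' (V ∩ range i)) := image_closure_subset_closure_image hcont
      _ = closure (j '' (g '' (i ⁻¹' V))) := by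
        rw [← image_preimage_eq_inter_range, ← image_comp, hcomm, image_comp]
  have preimage_subset : j ⁻¹' interior (closure (f '' V)) ⊆ closure (g '' (i ⁻¹' V)) := by
    rw [hj.isInducing.closure_eq_preimage_closure_image]
    exact preimage_mono (interior_subset.trans (closure_minimal image_subset isClosed_closure))
  obtain ⟨b, hb⟩ := hj.dense.exists_mem_open isOpen_interior (hf V hV ⟨i a, ha⟩)
  exact ⟨b, interior_maximal preimage_subset (isOpen_interior.preimage hj.continuous) hb⟩

section Category

open Filter

variable {Y Z : Type*} [TopologicalSpace Y] [TopologicalSpace Z] {f : Y → Z}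

theorem dense_preimage (hf : IsSkeletalMap f) {V : Set Z} (hVo : IsOpen V) (hVd : Dense V) :
    Dense (f ⁻¹' V) := by
  refine dense_iff_inter_open.2 fun U hU hne => ?_
  obtain ⟨z, hzU, hzV⟩ := hVd.inter_open_nonempty _ isOpen_interior (hf U hU hne)
  obtain ⟨_, hyV, y, hyU, rfl⟩ := mem_closure_iff.1 (interior_subset hzU) V hVo hzV
  exact ⟨y, hyU, hyV⟩

theorem tendsto_residual (hf : IsSkeletalMap f) (hcont : Continuous f) :
    Tendsto f (residual Y) (residual Z) :=
  le_countableGenerate_iff_of_countableInterFilter.2 fun _ ⟨hVo, hVd⟩ =>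
    residual_of_dense_open (hVo.preimage hcont) (hf.dense_preimage hVo hVd)

theorem isMeagre_preimage (hf : IsSkeletalMap f) (hcont : Continuous f) {s : Set Z}
    (hs : IsMeagre s) : IsMeagre (f ⁻¹' s) :=
  hf.tendsto_residual hcont hs

theorem baireSpace [BaireSpace Y] (hf : IsSkeletalMap f) (hcont : Continuous f)
    (hrange : DenseRange f) : BaireSpace Z where
  baire_property V hVo hVd := by
    have preimage_dense : Dense (f ⁻¹' ⋂ n, V n) := dense_of_mem_residual <|
      hf.tendsto_residual hcont <|
        countable_iInter_mem.2 fun n => residual_of_dense_open (hVo n) (hVd n)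
    exact (hrange.dense_image hcont preimage_dense).mono (image_preimage_subset f _)

end Category

end IsSkeletalMap

namespace Cp

variable {X K M : Type*} [TopologicalSpace X] [TopologicalSpace K] [TopologicalSpace M]
  {ψ : K → M}

/-- Postcomposition `f ↦ ψ ∘ f` with a continuous map `ψ : K → M`, as a map between the function
spaces `C_p(X, K)` and `C_p(X, M)`. -/
def postcomp (hψ : Continuous ψ) (f : Cp X K) : Cp X M :=
  ⟨ψ ∘ f.1, hψ.comp f.2⟩

theorem continuous_postcomp (hψ : Continuous ψ) :
    Continuous (postcomp hψ : Cp X K → Cp X M) :=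
  ((Continuous.piMap fun _ => hψ).comp continuous_subtype_val).subtype_mk _

theorem denseRange_val_comp_postcomp (hψ : Continuous ψ) (hrange : DenseRange ψ)
    (hdense : DenseRange (Subtype.val : Cp X K → X → K)) :
    DenseRange (Subtype.val ∘ postcomp hψ : Cp X K → X → M) :=
  (DenseRange.piMap fun _ : X => hrange).comp hdense (Continuous.piMap fun _ => hψ)

theorem denseRange_postcomp (hψ : Continuous ψ) (hrange : DenseRange ψ)
    (hdense : DenseRange (Subtype.val : Cp X K → X → K)) :
    DenseRange (postcomp hψ : Cp X K → Cp X M) :=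
  IsInducing.subtypeVal.dense_iff.2 fun g => by
    rw [← range_comp]
    exact denseRange_val_comp_postcomp hψ hrange hdense g.1

theorem isDenseInducing_val_of_denseRange (hψ : Continuous ψ) (hrange : DenseRange ψ)
    (hdense : DenseRange (Subtype.val : Cp X K → X → K)) :
    IsDenseInducing (Subtype.val : Cp X M → X → M) :=
  ⟨.subtypeVal, (denseRange_val_comp_postcomp hψ hrange hdense).mono
    (range_comp_subset_range _ _)⟩

theorem isSkeletalMap_postcomp (hψ : Continuous ψ) (hrange : DenseRange ψ)
    (hdense : DenseRange (Subtype.val : Cp X K → X → K)) (hskel : IsSkeletalMap ψ) :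
    IsSkeletalMap (postcomp hψ : Cp X K → Cp X M) :=
  .of_isDenseInducing ⟨.subtypeVal, hdense⟩ (isDenseInducing_val_of_denseRange hψ hrange hdense)
    (Continuous.piMap fun _ => hψ) rfl (.piMap (fun _ => hskel) fun _ => hrange)

end Cp

theorem statement3_general {X K M : Type*} [TopologicalSpace X] [TopologicalSpace K]
    [TopologicalSpace M] {ψ : K → M} (hψ : Continuous ψ) (hrange : DenseRange ψ)
    (hskel : IsSkeletalMap ψ) (hdense : DenseRange (Subtype.val : Cp X K → X → K)) :
    (BaireSpace (Cp X K) → BaireSpace (Cp X M)) ∧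
    (¬ IsMeagre (univ : Set (Cp X K)) → ¬ IsMeagre (univ : Set (Cp X M))) := by
  have postcomp_cont := Cp.continuous_postcomp (X := X) hψ
  have postcomp_skel := Cp.isSkeletalMap_postcomp hψ hrange hdense hskel
  exact ⟨fun _ => postcomp_skel.baireSpace postcomp_cont
      (Cp.denseRange_postcomp hψ hrange hdense),
    mt (postcomp_skel.isMeagre_preimage postcomp_cont)⟩

/-- Let `ψ : K → M` be a surjective continuous almost open map and let `X` be a Tychonoff
space such that `C_p(X,K)` is dense in `K^X`. If `C_p(X,K)` is Baire then so is `C_p(X,M)`,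
and if `C_p(X,K)` is non-meager then so is `C_p(X,M)`. -/
theorem statement3 (X K M : Type*) [TopologicalSpace X] [T1Space X] [CompletelyRegularSpace X]
    [TopologicalSpace K] [TopologicalSpace M]
    (ψ : K → M) (hsurj : Surjective ψ) (hcont : Continuous ψ) (hao : AlmostOpenMap ψ)
    (hdense : Dense (Set.range (Subtype.val : Cp X K → X → K))) :
    (BaireSpace (Cp X K) → BaireSpace (Cp X M)) ∧
    (¬ IsMeagre (Set.univ : Set (Cp X K)) → ¬ IsMeagre (Set.univ : Set (Cp X M))) :=
  statement3_general hcont hsurj.denseRange hao.isSkeletalMap hdense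
end

section
/- Let ψ : P → L be a surjective continuous almost open map between topological spaces and let E ⊆ P be a dense subset of P. If E (with the subspace topology) is a Baire space then ψ(E) (with the subspace topology of L) is a Baire space, and if E is non-meager then ψ(E) is non-meager. -/
/-!
A continuous skeletal map pulls dense open sets back to dense open sets, hence residual sets back
to residual sets, and both claims follow by transporting countable families of dense open sets
along such a map. Skeletality is the right weakening of almost openness here: the restriction
`E → ψ(E)` of an almost open map to a dense set need not be almost open, but it is skeletal,
because `ψ(U ∩ E)` has the same closure as `ψ(U)` for every open `U`.
-/

open Set Topology Function

/-- A map is skeletal if the image of every nonempty open set is somewhere dense. Unlike almost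
openness, this passes from a continuous map to its restrictions to dense subsets. Continuity, often
included in the definition, is not required here. -/
def SkeletalMap {X Y : Type*} [TopologicalSpace X] [TopologicalSpace Y] (f : X → Y) : Prop :=
  ∀ U : Set X, IsOpen U → U.Nonempty → (interior (closure (f '' U))).Nonempty

section

variable {X Y Z : Type*} [TopologicalSpace X] [TopologicalSpace Y] [TopologicalSpace Z]
  {f : X → Y} {g : Y → Z}

theorem AlmostOpenMap.skeletalMap (hf : AlmostOpenMap f) : SkeletalMap f :=
  fun U hU hne => (hf U hU hne).mono (interior_mono subset_closure)

namespace SkeletalMap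

theorem of_isDenseInducing (hf : IsDenseInducing f) : SkeletalMap f := fun _ hU ⟨x, hx⟩ =>
  ⟨f x, mem_interior_iff_mem_nhds.2 (hf.closure_image_mem_nhds (hU.mem_nhds hx))⟩

theorem comp (hg : SkeletalMap g) (hf : SkeletalMap f) (hgc : Continuous g) :
    SkeletalMap (g ∘ f) := by
  intro U hU hne
  refine (hg _ isOpen_interior (hf U hU hne)).mono (interior_mono ?_)
  refine closure_minimal ?_ isClosed_closure
  calc g '' interior (closure (f '' U))
      ⊆ g '' closure (f '' U) := image_mono interior_subset
    _ ⊆ closure (g '' (f '' U)) := image_closure_subset_closure_image hgc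
    _ = closure (g ∘ f '' U) := by rw [image_comp]

theorem of_comp_isInducing (hg : IsInducing g) (h : SkeletalMap (g ∘ f)) : SkeletalMap f := by
  intro U hU hne
  obtain ⟨z, hz⟩ := h U hU hne
  obtain ⟨_, hx, x, -, rfl⟩ :=
    mem_closure_iff.1 (interior_subset hz) _ isOpen_interior hz
  rw [image_comp] at hx
  refine ⟨f x, ?_⟩
  rw [hg.closure_eq_preimage_closure_image]
  exact preimage_interior_subset_interior_preimage hg.continuous hx

theorem dense_preimage (hf : SkeletalMap f) {V : Set Y} (hV : IsOpen V) (hVd : Dense V) :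
    Dense (f ⁻¹' V) := by
  rw [dense_iff_inter_open]
  intro U hU hne
  obtain ⟨y, hyU, hyV⟩ := hVd.inter_open_nonempty _ isOpen_interior (hf U hU hne)
  obtain ⟨_, hxV, x, hxU, rfl⟩ := mem_closure_iff.1 (interior_subset hyU) V hV hyV
  exact ⟨x, hxU, hxV⟩

theorem tendsto_residual (hf : SkeletalMap f) (hfc : Continuous f) :
    Filter.Tendsto f (residual X) (residual Y) := by
  apply Filter.le_countableGenerate_iff_of_countableInterFilter.mpr
  rintro V ⟨hV, hVd⟩
  exact residual_of_dense_open (hV.preimage hfc) (hf.dense_preimage hV hVd)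

theorem isMeagre_preimage (hf : SkeletalMap f) (hfc : Continuous f) {s : Set Y}
    (hs : IsMeagre s) : IsMeagre (f ⁻¹' s) :=
  hf.tendsto_residual hfc hs

theorem baireSpace [BaireSpace X] (hf : SkeletalMap f) (hfc : Continuous f)
    (hfd : DenseRange f) : BaireSpace Y where
  baire_property V hV hVd := by
    have hdense : Dense (⋂ n, f ⁻¹' V n) :=
      dense_iInter_of_isOpen_nat (fun n => (hV n).preimage hfc)
        (fun n => hf.dense_preimage (hV n) (hVd n))
    rw [← preimage_iInter] at hdense
    exact (hfd.dense_image hfc hdense).mono (image_preimage_subset _ _)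

theorem imageFactorization (hf : SkeletalMap f) (hfc : Continuous f) {E : Set X}
    (hE : Dense E) : SkeletalMap (E.imageFactorization f) := by
  apply of_comp_isInducing IsInducing.subtypeVal
  rw [imageFactorization_eq]
  exact hf.comp (of_isDenseInducing hE.isDenseInducing_val) hfc

end SkeletalMap

end

theorem statement4_general {P L : Type*} [TopologicalSpace P] [TopologicalSpace L]
    {ψ : P → L} (hψ : SkeletalMap ψ) (hcont : Continuous ψ) {E : Set P} (hdense : Dense E) :
    (BaireSpace E → BaireSpace (ψ '' E)) ∧
    (¬ IsMeagre (Set.univ : Set E) → ¬ IsMeagre (Set.univ : Set (ψ '' E))) := by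
  have hskel : SkeletalMap (E.imageFactorization ψ) := hψ.imageFactorization hcont hdense
  have hres : Continuous (E.imageFactorization ψ) :=
    (hcont.comp continuous_subtype_val).subtype_mk _
  exact ⟨fun _ => hskel.baireSpace hres imageFactorization_surjective.denseRange,
    mt (hskel.isMeagre_preimage hres)⟩

/-- Let `ψ : P → L` be a surjective continuous almost open map and let `E ⊆ P` be dense.
If `E` is Baire then `ψ(E)` is Baire, and if `E` is non-meager then `ψ(E)` is non-meager
(both with the subspace topology). -/
theorem statement4 (P L : Type*) [TopologicalSpace P] [TopologicalSpace L]
    (ψ : P → L) (hsurj : Surjective ψ) (hcont : Continuous ψ) (hao : AlmostOpenMap ψ)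
    (E : Set P) (hdense : Dense E) :
    (BaireSpace E → BaireSpace (ψ '' E)) ∧
    (¬ IsMeagre (Set.univ : Set E) → ¬ IsMeagre (Set.univ : Set (ψ '' E))) :=
  statement4_general hao.skeletalMap hcont hdense
end

section
/- Let L be a nonempty metrizable compact Hausdorff space without isolated points and let C = {0,1}^ℕ denote the Cantor space. Then there exists a surjective continuous irreducible map ψ : C → L. -/
open Set Topology Function

/-- A surjective map `f : X → Y` is irreducible if no proper closed subset of `X`
maps onto `Y`. -/
def IrreducibleMap {X Y : Type*} [TopologicalSpace X] [TopologicalSpace Y] (f : X → Y) : Prop :=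
  ∀ Z : Set X, IsClosed Z → f '' Z = Set.univ → Z = Set.univ

/-!
By the Hausdorff–Alexandroff theorem `L` is a continuous image of the Cantor space, and Zorn's lemma
shrinks that surjection to an irreducible one on a closed subset `K`. If `x` were isolated in `K`,
then the image of the closed set `K \ {x}` would be closed and miss exactly the image of `x`, which
would be isolated in `L`. So `K` is perfect, and Brouwer's characterization of the Cantor space
gives a homeomorphism between the Cantor space and `K`.

For Brouwer's theorem, coordinates `X → Bool` are chosen one at a time. The `n`-th one takes both
values on every fiber of the previous ones, which makes the range dense, and decides membership in
the `n`-th clopen set on each of these fibers, which makes the coordinates separate points.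
-/

theorem perfectSpace_iff_forall_not_isOpen_singleton {X : Type*} [TopologicalSpace X] :
    PerfectSpace X ↔ ∀ x : X, ¬ IsOpen ({x} : Set X) := by
  simp only [perfectSpace_iff_forall_not_isolated, isOpen_singleton_iff_punctured_nhds,
    Filter.neBot_iff, ne_eq]

section IrreducibleMap

variable {X Y : Type*} [TopologicalSpace X] [TopologicalSpace Y] {f : X → Y}

theorem IrreducibleMap.comp_homeomorph {W : Type*} [TopologicalSpace W] (hf : IrreducibleMap f)
    (e : W ≃ₜ X) : IrreducibleMap (f ∘ e) := by
  intro Z hZ hfZ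
  rw [image_comp] at hfZ
  have heZ : e '' Z = univ := hf _ (e.isClosedMap Z hZ) hfZ
  rw [← e.preimage_image Z, heZ, preimage_univ]

theorem IrreducibleMap.perfectSpace [PerfectSpace Y] (hf : IrreducibleMap f)
    (hclosed : IsClosedMap f) (hsurj : Surjective f) : PerfectSpace X := by
  refine perfectSpace_iff_forall_not_isOpen_singleton.2 fun x hx ↦ not_isOpen_singleton (f x) ?_
  have hproper : f '' {x}ᶜ ≠ univ := fun h ↦
    compl_ne_univ.2 (singleton_nonempty x) (hf _ hx.isClosed_compl h)
  have hsub : (f '' {x}ᶜ)ᶜ ⊆ {f x} := by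
    simpa only [compl_compl, image_singleton] using subset_image_compl hsurj (s := {x}ᶜ)
  have heq : (f '' {x}ᶜ)ᶜ = {f x} := (nonempty_compl.2 hproper).subset_singleton_iff.1 hsub
  exact heq ▸ (hclosed _ hx.isClosed_compl).isOpen_compl

theorem exists_isClosed_irreducibleMap_domRestrict [CompactSpace X] [T2Space X] [T2Space Y]
    (hf : Continuous f) (hsurj : Surjective f) :
    ∃ K : Set X, IsClosed K ∧ Surjective (K.domRestrict f) ∧ IrreducibleMap (K.domRestrict f) := by
  -- `exists_compact_surjective_zorn_subset` needs the codomain in the universe of the domain, so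
  -- `Y` is replaced by the homeomorphic quotient of `X`.
  let e : Quotient (Setoid.ker f) ≃ₜ Y :=
    IsQuotientMap.homeomorph (f := ⟨f, hf⟩) (hf.isClosedMap.isQuotientMap hf hsurj)
  have : T2Space (Quotient (Setoid.ker f)) := e.symm.t2Space
  obtain ⟨K, hK, himage, hirr⟩ := exists_compact_surjective_zorn_subset
    (e.symm.continuous.comp hf) (e.symm.surjective.comp hsurj)
  have image_eq_univ_iff (s : Set X) : (e.symm ∘ f) '' s = univ ↔ f '' s = univ := by
    rw [image_comp, e.symm.image_eq_preimage_symm, preimage_eq_univ_iff]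
    simp
  refine ⟨K, (isCompact_iff_compactSpace.2 hK).isClosed, ?_, fun Z hZ hfZ ↦ ?_⟩
  · rw [← range_eq_univ, range_domRestrict, ← image_eq_univ_iff, himage]
  · by_contra hne
    refine hirr Z hne hZ ?_
    rw [domRestrict_eq, image_comp] at hfZ ⊢
    rwa [image_eq_univ_iff]

end IrreducibleMap

section Brouwer

open PiNat

variable {X : Type*} [TopologicalSpace X]

theorem denseRange_of_forall_exists_res_eq {E S : Type*} [TopologicalSpace E] [DiscreteTopology E]
    [Nonempty S] {a : S → ℕ → E}
    (ha : ∀ n s b, ∃ t, res (a t) n = res (a s) n ∧ a t n = b) : DenseRange a := by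
  have hres (x : ℕ → E) (n : ℕ) : ∃ s, res (a s) n = res x n := by
    induction n with
    | zero => exact ⟨Classical.arbitrary S, rfl⟩
    | succ n ih =>
      obtain ⟨s, hs⟩ := ih
      obtain ⟨t, hts, htn⟩ := ha n s (x n)
      exact ⟨t, by rw [res_succ, res_succ, hts, hs, htn]⟩
  refine (isTopologicalBasis_cylinders fun _ ↦ E).dense_iff.2 ?_
  rintro _ ⟨x, n, rfl⟩ -
  obtain ⟨s, hs⟩ := hres x n
  exact ⟨a s, by rwa [cylinder_eq_res], mem_range_self s⟩

theorem boolIndicator_eq_boolIndicator_iff {S : Type*} {U : Set S} {x y : S} :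
    U.boolIndicator x = U.boolIndicator y ↔ (x ∈ U ↔ y ∈ U) := by
  rw [Bool.eq_iff_iff, ← mem_iff_boolIndicator, ← mem_iff_boolIndicator]

theorem surjOn_boolIndicator_univ {S : Type*} {A U : Set S} (hmem : (A ∩ U).Nonempty)
    (hnotMem : (A \ U).Nonempty) : SurjOn U.boolIndicator A univ := by
  obtain ⟨x, hxA, hxU⟩ := hmem
  obtain ⟨y, hyA, hyU⟩ := hnotMem
  rintro (_ | _) -
  · exact ⟨y, hyA, (notMem_iff_boolIndicator U y).1 hyU⟩
  · exact ⟨x, hxA, (mem_iff_boolIndicator U x).1 hxU⟩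

theorem isLocallyConstant_boolIndicator {U : Set X} (hU : IsClopen U) :
    IsLocallyConstant U.boolIndicator :=
  (IsLocallyConstant.iff_continuous _).2 ((continuous_boolIndicator_iff_isClopen U).2 hU)

section TotallySeparatedSpace

variable [TotallySeparatedSpace X] [PerfectSpace X]

theorem exists_isClopen_split {A : Set X} (hA : IsOpen A) (hne : A.Nonempty) :
    ∃ V : Set X, IsClopen V ∧ (A ∩ V).Nonempty ∧ (A \ V).Nonempty := by
  obtain ⟨x, hx⟩ := hne
  obtain ⟨y, ⟨hy, -⟩, hyx⟩ := preperfect_iff_nhds.1 hA.preperfect x hx A (hA.mem_nhds hx)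
  obtain ⟨V, hV, hyV, hxV⟩ := exists_isClopen_of_totally_separated hyx
  exact ⟨V, hV, ⟨y, hy, hyV⟩, ⟨x, hx, hxV⟩⟩

theorem exists_isClopen_split_deciding {A U : Set X} (hA : IsOpen A) (hne : A.Nonempty)
    (hU : IsClopen U) :
    ∃ V : Set X, IsClopen V ∧ (A ∩ V).Nonempty ∧ (A \ V).Nonempty ∧
      ∀ x ∈ A, ∀ y ∈ A, (x ∈ V ↔ y ∈ V) → (x ∈ U ↔ y ∈ U) := by
  by_cases hsplit : (A ∩ U).Nonempty ∧ (A \ U).Nonempty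
  · exact ⟨U, hU, hsplit.1, hsplit.2, fun x _ y _ ↦ id⟩
  · have hconst : ∀ x ∈ A, ∀ y ∈ A, x ∈ U → y ∈ U := fun x hx y hy hxU ↦
      by_contra fun hyU ↦ hsplit ⟨⟨x, hx, hxU⟩, ⟨y, hy, hyU⟩⟩
    obtain ⟨V, hV, hmem, hnotMem⟩ := exists_isClopen_split hA hne
    exact ⟨V, hV, hmem, hnotMem, fun x hx y hy _ ↦ ⟨hconst x hx y hy, hconst y hy x hx⟩⟩

theorem exists_locallyConstant_split_fibers_deciding {ι : Type*} (F : LocallyConstant X ι)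
    {U : Set X} (hU : IsClopen U) :
    ∃ c : LocallyConstant X Bool, (∀ x b, ∃ y, F y = F x ∧ c y = b) ∧
      ∀ x y, F x = F y → c x = c y → (x ∈ U ↔ y ∈ U) := by
  choose! V hV hmem hnotMem hdecides using fun i (hi : (F ⁻¹' {i}).Nonempty) ↦
    exists_isClopen_split_deciding (F.isLocallyConstant.isOpen_fiber i) hi hU
  have hfiber (x : X) : (F ⁻¹' {F x}).Nonempty := ⟨x, rfl⟩
  let c (x : X) : Bool := (V (F x)).boolIndicator x
  have hc : IsLocallyConstant c := by
    refine (IsLocallyConstant.iff_eventually_eq c).2 fun x ↦ ?_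
    filter_upwards [F.isLocallyConstant.eventually_eq x,
      (isLocallyConstant_boolIndicator (hV _ (hfiber x))).eventually_eq x] with y hF hind
    have hFy : F y = F x := hF
    simpa only [c, hFy] using hind
  refine ⟨⟨c, hc⟩, fun x b ↦ ?_, fun x y hF hcxy ↦ ?_⟩
  · obtain ⟨y, hy, hyb⟩ :=
      surjOn_boolIndicator_univ (hmem _ (hfiber x)) (hnotMem _ (hfiber x)) (mem_univ b)
    have hFy : F y = F x := hy
    exact ⟨y, hFy, by simpa only [LocallyConstant.coe_mk, c, hFy] using hyb⟩
  · have hind : (V (F x)).boolIndicator x = (V (F x)).boolIndicator y := by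
      simpa only [LocallyConstant.coe_mk, c, hF] using hcxy
    exact hdecides _ (hfiber x) x rfl y hF.symm (boolIndicator_eq_boolIndicator_iff.1 hind)

theorem exists_continuous_nat_bool_split_deciding {U : ℕ → Set X} (hU : ∀ n, IsClopen (U n)) :
    ∃ a : X → ℕ → Bool, Continuous a ∧
      (∀ n x b, ∃ y, res (a y) n = res (a x) n ∧ a y n = b) ∧
      ∀ x y, a x = a y → ∀ n, x ∈ U n ↔ y ∈ U n := by
  choose c hsurj hmem using fun (F : LocallyConstant X (List Bool)) n ↦
    exists_locallyConstant_split_fibers_deciding F (hU n)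
  let F : ℕ → LocallyConstant X (List Bool) := Nat.rec (LocallyConstant.const X []) fun n F ↦
    ⟨fun x ↦ c F n x :: F x, (c F n).isLocallyConstant.comp₂ F.isLocallyConstant List.cons⟩
  let a (x : X) (n : ℕ) : Bool := c (F n) n x
  have hF (n : ℕ) (x : X) : F n x = res (a x) n := by
    induction n with
    | zero => rfl
    | succ n ih => rw [res_succ, ← ih]; rfl
  refine ⟨a, continuous_pi fun n ↦ (c (F n) n).continuous, fun n x b ↦ ?_, fun x y hxy n ↦ ?_⟩
  · simpa only [hF] using hsurj (F n) n x b
  · exact hmem (F n) n x y (by rw [hF, hF, hxy]) (congrFun hxy n)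

end TotallySeparatedSpace

theorem nonempty_homeomorph_nat_bool [CompactSpace X] [T2Space X] [SecondCountableTopology X]
    [TotallyDisconnectedSpace X] [PerfectSpace X] [Nonempty X] :
    Nonempty (X ≃ₜ (ℕ → Bool)) := by
  have : Countable (TopologicalSpace.Clopens X) :=
    TopologicalSpace.Clopens.countable_iff_secondCountable.2 inferInstance
  obtain ⟨U, hU⟩ := exists_surjective_nat (TopologicalSpace.Clopens X)
  obtain ⟨a, hcont, hres, hmem⟩ := exists_continuous_nat_bool_split_deciding fun n ↦ (U n).isClopen
  have hinj : Injective a := by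
    intro x y hxy
    by_contra hne
    obtain ⟨V, hV, hxV, hyV⟩ := exists_isClopen_of_totally_separated hne
    obtain ⟨n, hn⟩ := hU ⟨V, hV⟩
    have hxy := hmem x y hxy n
    rw [hn] at hxy
    exact hyV (hxy.1 hxV)
  have hsurj : Surjective a := by
    rw [← range_eq_univ, ← (isCompact_range hcont).isClosed.closure_eq]
    exact (denseRange_of_forall_exists_res_eq hres).closure_range
  exact ⟨(isHomeomorph_iff_continuous_bijective.2 ⟨hcont, hinj, hsurj⟩).homeomorph⟩

end Brouwer

/-- For every nonempty metrizable compact Hausdorff space `L` without isolated points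
there exists a surjective continuous irreducible map from the Cantor space
`C = {0,1}^ℕ` onto `L`. -/
theorem statement5 (L : Type*) [TopologicalSpace L] [CompactSpace L] [T2Space L]
    [TopologicalSpace.MetrizableSpace L] [Nonempty L]
    (hni : ∀ x : L, ¬ IsOpen ({x} : Set L)) :
    ∃ ψ : (ℕ → Bool) → L, Continuous ψ ∧ Surjective ψ ∧ IrreducibleMap ψ := by
  let _ := TopologicalSpace.metrizableSpaceMetric L
  have : PerfectSpace L := perfectSpace_iff_forall_not_isOpen_singleton.2 hni
  obtain ⟨f, hf, hfsurj⟩ := exists_nat_bool_continuous_surjective_of_compact L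
  obtain ⟨K, hK, hsurj, hirr⟩ := exists_isClosed_irreducibleMap_domRestrict hf hfsurj
  have hcont : Continuous (K.domRestrict f) := hf.comp continuous_subtype_val
  have : CompactSpace K := isCompact_iff_compactSpace.1 hK.isCompact
  have : PerfectSpace K := hirr.perfectSpace hcont.isClosedMap hsurj
  have : Nonempty K := hsurj.nonempty
  obtain ⟨e⟩ := nonempty_homeomorph_nat_bool (X := K)
  exact ⟨K.domRestrict f ∘ e.symm, hcont.comp e.symm.continuous, hsurj.comp e.symm.surjective,
    hirr.comp_homeomorph e.symm⟩
end

section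
/- A compact Hausdorff space X is π-monolithic if, and only if, for every sequence (U_n)_{n∈ℕ} of nonempty open subsets of X there exists a compact metrizable subspace K ⊆ X such that K ∩ U_n ≠ ∅ for every n ∈ ℕ. -/
open Set Topology Function

/-- A compact Hausdorff space `X` is π-monolithic if for every surjective continuous map
`f : X → K` onto a metrizable compact Hausdorff space `K` there exists a metrizable
compact subspace `T ⊆ X` with `f(T) = K`. -/
def PiMonolithic (X : Type*) [TopologicalSpace X] [CompactSpace X] [T2Space X] : Prop :=
  ∀ (K : Type) (_ : TopologicalSpace K), CompactSpace K → T2Space K →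
    TopologicalSpace.MetrizableSpace K →
    ∀ f : X → K, Continuous f → Surjective f →
      ∃ T : Set X, IsCompact T ∧ TopologicalSpace.MetrizableSpace T ∧ f '' T = Set.univ

/-!
If `X` is π-monolithic and `x n ∈ U n`, complete regularity gives a continuous map from `X` to the
Hilbert cube whose fibre through `x n` lies in `U n` for every `n`; a metrizable compact set with
the same image as `X` meets all these fibres. Conversely, given `f : X → K`, pull back a countable
π-base of `K`: a compact set meeting all the preimages has dense and closed image.
-/

theorem exists_continuous_unitInterval_fiber_subset {X ι : Type*} [TopologicalSpace X]
    [CompletelyRegularSpace X] {U : ι → Set X} {x : ι → X} (hU : ∀ i, IsOpen (U i))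
    (hx : ∀ i, x i ∈ U i) :
    ∃ F : X → ι → unitInterval, Continuous F ∧ ∀ i, F ⁻¹' {F (x i)} ⊆ U i := by
  choose g hg_cont hg_zero hg_one using fun i ↦
    CompletelyRegularSpace.completely_regular_isOpen (x i) (U i) (hU i) (hx i)
  refine ⟨fun y i ↦ g i y, continuous_pi hg_cont, fun i y hy ↦ ?_⟩
  by_contra hyU
  have hg_eq : g i y = g i (x i) := congrFun hy i
  rw [hg_one i hyU, hg_zero i] at hg_eq
  exact one_ne_zero hg_eq

theorem PiMonolithic.exists_isCompact_metrizable_image_eq_range {X : Type*} [TopologicalSpace X]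
    [CompactSpace X] [T2Space X] (hX : PiMonolithic X) {Y : Type} [TopologicalSpace Y]
    [TopologicalSpace.MetrizableSpace Y] {f : X → Y} (hf : Continuous f) :
    ∃ T : Set X, IsCompact T ∧ TopologicalSpace.MetrizableSpace T ∧ f '' T = range f := by
  obtain ⟨T, hT, hT_metr, hT_image⟩ := hX (range f) inferInstance
    (isCompact_iff_compactSpace.mp (isCompact_range hf)) inferInstance inferInstance
    (rangeFactorization f) hf.rangeFactorization rangeFactorization_surjective
  refine ⟨T, hT, hT_metr, ?_⟩
  calc
    f '' T = Subtype.val '' (rangeFactorization f '' T) :=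
      image_comp Subtype.val (rangeFactorization f) T
    _ = range f := by rw [hT_image, image_univ, Subtype.range_coe]

theorem exists_seq_isOpen_nonempty_forall_dense (Y : Type*) [TopologicalSpace Y]
    [SecondCountableTopology Y] [Nonempty Y] :
    ∃ V : ℕ → Set Y, (∀ n, IsOpen (V n)) ∧ (∀ n, (V n).Nonempty) ∧
      ∀ s : Set Y, (∀ n, (V n ∩ s).Nonempty) → Dense s := by
  have hbasis := TopologicalSpace.isBasis_countableBasis Y
  obtain ⟨V, hV⟩ := (TopologicalSpace.countable_countableBasis Y).exists_eq_range
    (Nonempty.of_sUnion_eq_univ hbasis.sUnion_eq)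
  have hV_mem : ∀ n, V n ∈ TopologicalSpace.countableBasis Y := fun n ↦ hV ▸ mem_range_self n
  refine ⟨V, fun n ↦ hbasis.isOpen (hV_mem n),
    fun n ↦ TopologicalSpace.nonempty_of_mem_countableBasis (hV_mem n), fun s hs ↦ ?_⟩
  rw [hbasis.dense_iff, hV]
  rintro _ ⟨n, rfl⟩ _
  exact hs n

/-- A compact Hausdorff space `X` is π-monolithic iff for every sequence of nonempty open
subsets `U n` of `X` there is a compact metrizable subspace `K ⊆ X` meeting every `U n`. -/
theorem statement7 (X : Type*) [TopologicalSpace X] [CompactSpace X] [T2Space X] :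
    PiMonolithic X ↔
      ∀ U : ℕ → Set X, (∀ n, IsOpen (U n)) → (∀ n, (U n).Nonempty) →
        ∃ K : Set X, IsCompact K ∧ TopologicalSpace.MetrizableSpace K ∧
          ∀ n, (K ∩ U n).Nonempty := by
  constructor
  · intro hX U hU hU_nonempty
    choose x hx using hU_nonempty
    obtain ⟨F, hF, hF_fiber⟩ := exists_continuous_unitInterval_fiber_subset hU hx
    obtain ⟨T, hT, hT_metr, hT_image⟩ := hX.exists_isCompact_metrizable_image_eq_range hF
    refine ⟨T, hT, hT_metr, fun n ↦ ?_⟩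
    obtain ⟨t, ht, ht_eq⟩ : F (x n) ∈ F '' T := hT_image ▸ mem_range_self (x n)
    exact ⟨t, ht, hF_fiber n ht_eq⟩
  · intro hX K _ _ _ _ f hf hf_surj
    rcases isEmpty_or_nonempty K with _ | _
    · exact ⟨∅, isCompact_empty, inferInstance, Subsingleton.elim _ _⟩
    let := TopologicalSpace.metrizableSpaceMetric K
    obtain ⟨V, hV, hV_nonempty, hV_dense⟩ := exists_seq_isOpen_nonempty_forall_dense K
    obtain ⟨T, hT, hT_metr, hT_meets⟩ := hX (fun n ↦ f ⁻¹' V n) (fun n ↦ (hV n).preimage hf)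
      (fun n ↦ (hV_nonempty n).preimage hf_surj)
    have hT_dense : Dense (f '' T) := hV_dense _ fun n ↦ by
      simpa only [inter_comm, image_inter_preimage] using (hT_meets n).image f
    exact ⟨T, hT, hT_metr, (hT.image hf).isClosed.closure_eq ▸ hT_dense.closure_eq⟩
end

section
/- For every nonempty Polish space L there exists a surjective continuous open map φ : ℕ^ℕ → L, where ℕ^ℕ is the Baire space of sequences of natural numbers with the product topology. -/
open Set Topology Function

/-!
Take a tree of nonempty open sets, rooted at the whole space, in which the children of each set
cover it, have closures inside it, and have diameters tending to zero along every branch. By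
completeness each branch determines a point. Since the children cover, every point of the set at a
node lies on a branch through that node, so the image of the corresponding cylinder is exactly
that set. Openness and surjectivity both follow from this equality.
-/

open CantorScheme PiNat Filter
open scoped ENNReal

/-- A scheme of sets indexed by finite sequences is covering if each of its sets is covered by its
children. As in `CantorScheme`, the child of `A l` with index `a` is `A (a :: l)`, so that lists
record a branch with its latest entry first. -/
def IsCoveringScheme {α β : Type*} (A : List β → Set α) : Prop :=
  ∀ l, A l ⊆ ⋃ a, A (a :: l)

section Branches

variable {α β : Type*} {A : List β → Set α}

theorem exists_seq_eq_apply_res (f : List β → β) : ∃ z : ℕ → β, ∀ n, z n = f (res z n) := by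
  let branch : ℕ → List β := fun n => n.rec [] fun _ l => f l :: l
  have res_eq (n : ℕ) : res (fun k => f (branch k)) n = branch n := by
    induction n with
    | zero => rfl
    | succ n ih => rw [res_succ, ih]
  exact ⟨fun k => f (branch k), fun n => by rw [res_eq]⟩

theorem IsCoveringScheme.exists_mem_cylinder_forall_mem_res (hcov : IsCoveringScheme A)
    (hanti : CantorScheme.Antitone A) {x : ℕ → β} {n : ℕ} {y : α} (hy : y ∈ A (res x n)) :
    ∃ z ∈ cylinder x n, ∀ m, y ∈ A (res z m) := by
  have : Nonempty β := ⟨x 0⟩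
  have exists_child (l : List β) (hl : y ∈ A l) : ∃ a, y ∈ A (a :: l) := mem_iUnion.1 (hcov l hl)
  choose! child hchild using exists_child
  obtain ⟨z, hz⟩ := exists_seq_eq_apply_res fun l =>
    if l.length < n then x l.length else child l
  simp only [res_length] at hz
  have hzx : z ∈ cylinder x n := fun m hm => by rw [hz, if_pos hm]
  have hzn : y ∈ A (res z n) := res_eq_res.2 (fun {m} hm => hzx m hm) ▸ hy
  refine ⟨z, hzx, fun m => ?_⟩
  rcases le_total m n with hmn | hnm
  · have hres : _root_.Antitone fun k => A (res z k) :=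
      antitone_nat_of_succ_le fun k => hanti (res z k) (z k)
    exact hres hmn hzn
  · induction m, hnm using Nat.le_induction with
    | base => exact hzn
    | succ m hm ih =>
      rw [res_succ, hz, if_neg hm.not_gt]
      exact hchild _ ih

end Branches

section InducedMap

variable {α β : Type*} {A : List β → Set α} {φ : (ℕ → β) → α}

theorem eq_of_forall_mem_res [MetricSpace α] (hdiam : VanishingDiam A) {x : ℕ → β} {y z : α}
    (hy : ∀ n, y ∈ A (res x n)) (hz : ∀ n, z ∈ A (res x n)) : y = z :=
  eq_of_forall_dist_le fun ε hε =>
    let ⟨n, hn⟩ := hdiam.dist_lt ε hε x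
    (hn y (hy n) z (hz n)).le

theorem exists_continuous_forall_mem_res [PseudoMetricSpace α] [CompleteSpace α]
    [TopologicalSpace β] [DiscreteTopology β] (hanti : ClosureAntitone A)
    (hdiam : VanishingDiam A) (hne : ∀ l, (A l).Nonempty) :
    ∃ φ : (ℕ → β) → α, Continuous φ ∧ ∀ x n, φ x ∈ A (res x n) := by
  have hdom (x : ℕ → β) : x ∈ (inducedMap A).1 :=
    hanti.map_of_vanishingDiam hdiam hne ▸ mem_univ x
  exact ⟨fun x => (inducedMap A).2 ⟨x, hdom x⟩,
    hdiam.map_continuous.comp (continuous_id.subtype_mk hdom), fun x => map_mem ⟨x, hdom x⟩⟩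

theorem IsCoveringScheme.image_cylinder_eq [MetricSpace α] (hcov : IsCoveringScheme A)
    (hanti : CantorScheme.Antitone A) (hdiam : VanishingDiam A)
    (hφ : ∀ x n, φ x ∈ A (res x n)) (x : ℕ → β) (n : ℕ) :
    φ '' cylinder x n = A (res x n) := by
  refine Subset.antisymm ?_ fun y hy => ?_
  · rintro _ ⟨z, hz, rfl⟩
    have hres : res z n = res x n := res_eq_res.2 fun {m} hm => hz m hm
    exact hres ▸ hφ z n
  · obtain ⟨z, hz, hyz⟩ := hcov.exists_mem_cylinder_forall_mem_res hanti hy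
    exact ⟨z, hz, eq_of_forall_mem_res hdiam (hφ z) hyz⟩

theorem isOpenMap_of_isOpen_image_cylinder [TopologicalSpace α] [TopologicalSpace β]
    [DiscreteTopology β] (h : ∀ x n, IsOpen (φ '' cylinder x n)) : IsOpenMap φ := by
  refine (isTopologicalBasis_cylinders fun _ : ℕ => β).isOpenMap_iff.2 ?_
  rintro _ ⟨x, n, rfl⟩
  exact h x n

end InducedMap

section Existence

variable {α : Type*}

theorem exists_isOpen_mem_closure_subset_ediam_le [PseudoEMetricSpace α] {U : Set α} {x : α}
    (hU : U ∈ 𝓝 x) {ε : ℝ≥0∞} (hε : ε ≠ 0) :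
    ∃ V, IsOpen V ∧ x ∈ V ∧ closure V ⊆ U ∧ Metric.ediam V ≤ ε := by
  obtain ⟨r, hr, hrU⟩ := Metric.nhds_basis_closedEBall.mem_iff.1 hU
  refine ⟨Metric.eball x (min r (ε / 2)), Metric.isOpen_eball,
    Metric.mem_eball_self (lt_min hr (ENNReal.half_pos hε)), ?_, ?_⟩
  · calc
      closure (Metric.eball x (min r (ε / 2))) ⊆ Metric.closedEBall x r :=
        closure_minimal ((Metric.eball_subset_eball (min_le_left _ _)).trans
          Metric.eball_subset_closedEBall) Metric.isClosed_closedEBall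
      _ ⊆ U := hrU
  · calc
      Metric.ediam (Metric.eball x (min r (ε / 2))) ≤ 2 * min r (ε / 2) := Metric.ediam_eball_le
      _ ≤ 2 * (ε / 2) := by gcongr; exact min_le_right _ _
      _ = ε := ENNReal.mul_div_cancel two_ne_zero ENNReal.ofNat_ne_top

theorem exists_seq_isOpen_cover_ediam_le [PseudoEMetricSpace α] [SecondCountableTopology α]
    {U : Set α} (hU : IsOpen U) (hne : U.Nonempty) {ε : ℝ≥0∞} (hε : ε ≠ 0) :
    ∃ V : ℕ → Set α, (∀ a, IsOpen (V a)) ∧ (∀ a, (V a).Nonempty) ∧ (∀ a, closure (V a) ⊆ U) ∧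
      (∀ a, Metric.ediam (V a) ≤ ε) ∧ U ⊆ ⋃ a, V a := by
  choose! W hWopen hxW hWU hWε using fun x (hx : x ∈ U) =>
    exists_isOpen_mem_closure_subset_ediam_le (hU.mem_nhds hx) hε
  obtain ⟨t, htU, htc, hcov⟩ := TopologicalSpace.countable_cover_nhdsWithin
    fun x hx => mem_nhdsWithin_of_mem_nhds ((hWopen x hx).mem_nhds (hxW x hx))
  have htne : t.Nonempty := (nonempty_biUnion.1 (hne.mono hcov)).imp fun _ hx => hx.1
  obtain ⟨e, rfl⟩ := htc.exists_eq_range htne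
  have heU (a : ℕ) : e a ∈ U := htU (mem_range_self a)
  rw [biUnion_range] at hcov
  exact ⟨fun a => W (e a), fun a => hWopen _ (heU a), fun a => ⟨e a, hxW _ (heU a)⟩,
    fun a => hWU _ (heU a), fun a => hWε _ (heU a), hcov⟩

theorem vanishingDiam_of_ediam_cons_le [PseudoMetricSpace α] {β : Type*} {A : List β → Set α}
    {ε : ℕ → ℝ≥0∞} (hε : Tendsto ε atTop (𝓝 0))
    (hA : ∀ l a, Metric.ediam (A (a :: l)) ≤ ε l.length) : VanishingDiam A := fun x =>
  (tendsto_add_atTop_iff_nat 1).1 <|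
    tendsto_of_tendsto_of_tendsto_of_le_of_le tendsto_const_nhds hε (fun _ => zero_le)
      fun n => (hA (res x n) (x n)).trans_eq (by rw [res_length])

theorem exists_isOpen_isCoveringScheme (α : Type*) [PseudoMetricSpace α]
    [SecondCountableTopology α] [Nonempty α] :
    ∃ A : List ℕ → Set α, A [] = univ ∧ (∀ l, IsOpen (A l)) ∧ (∀ l, (A l).Nonempty) ∧
      ClosureAntitone A ∧ VanishingDiam A ∧ IsCoveringScheme A := by
  have hpos (n : ℕ) : (2⁻¹ : ℝ≥0∞) ^ n ≠ 0 := pow_ne_zero n (by simp)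
  choose V hopen hne hclosure hdiam hcov using
    fun (U : {U : Set α // IsOpen U ∧ U.Nonempty}) (n : ℕ) =>
      exists_seq_isOpen_cover_ediam_le U.2.1 U.2.2 (hpos n)
  obtain ⟨A, hnil, hcons⟩ : ∃ A : List ℕ → {U : Set α // IsOpen U ∧ U.Nonempty},
      (A [] : Set α) = univ ∧ ∀ l a, (A (a :: l) : Set α) = V (A l) l.length a :=
    ⟨List.rec ⟨univ, isOpen_univ, univ_nonempty⟩ fun a l U =>
      ⟨V U l.length a, hopen U l.length a, hne U l.length a⟩, rfl, fun _ _ => rfl⟩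
  have hvanish : VanishingDiam fun l => (A l : Set α) :=
    vanishingDiam_of_ediam_cons_le
      (ENNReal.tendsto_pow_atTop_nhds_zero_of_lt_one ENNReal.one_half_lt_one)
      fun l a => (hcons l a).symm ▸ hdiam (A l) l.length a
  refine ⟨fun l => A l, hnil, fun l => (A l).2.1, fun l => (A l).2.2, fun l a => ?_, hvanish,
    fun l => ?_⟩
  · simpa only [hcons] using hclosure (A l) l.length a
  · simpa only [hcons] using hcov (A l) l.length

end Existence

/-- For every nonempty Polish space `L` there is a surjective continuous open map
`φ : ℕ^ℕ → L` from the Baire space of sequences of natural numbers onto `L`. -/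
theorem statement9 (L : Type*) [TopologicalSpace L] [PolishSpace L] [Nonempty L] :
    ∃ φ : (ℕ → ℕ) → L, Continuous φ ∧ Surjective φ ∧ IsOpenMap φ := by
  let := TopologicalSpace.upgradeIsCompletelyMetrizable L
  obtain ⟨A, hroot, hopen, hne, hanti, hdiam, hcov⟩ := exists_isOpen_isCoveringScheme L
  obtain ⟨φ, hφ, hmem⟩ := exists_continuous_forall_mem_res hanti hdiam hne
  have himage (x : ℕ → ℕ) (n : ℕ) : φ '' cylinder x n = A (res x n) :=
    hcov.image_cylinder_eq hanti.antitone hdiam hmem x n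
  have hrange : range φ = univ := by
    rw [← image_univ, ← cylinder_zero 0, himage, res_zero, hroot]
  exact ⟨φ, hφ, range_eq_univ.1 hrange,
    isOpenMap_of_isOpen_image_cylinder fun x n => himage x n ▸ hopen (res x n)⟩
end
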